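/- For all integers m ≥ 1 and k ≥ 1 there exists a constant C > 0 such that for every integer ν ≥ 1, every open set Ω ⊆ ℝ^m, every bounded k-times continuously differentiable map u : Ω → ℝ^ν, every ρ > 0 and every x ∈ Ω with the open ball B_ρ(x) contained in Ω, one has ‖Du(x)‖ ≤ C ( ‖u‖_∞^{1−1/k} ((M‖D^k u‖)(x))^{1/k} + ‖u‖_∞ / ρ ), where ‖u‖_∞ := sup_{y ∈ Ω} ‖u(y)‖. -/

import Mathlib

open MeasureTheory Filter Topology ENNReal

/-- The maximal function of `f : Ω → [0,∞]`:
`(Mf)(x) = sup_{r>0} λ(B_r(x))⁻¹ ∫_{Ω ∩ B_r(x)} f`. -/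
noncomputable def maximalFn {m : ℕ} (Ω : Set (EuclideanSpace ℝ (Fin m)))
    (f : EuclideanSpace ℝ (Fin m) → ℝ≥0∞) (x : EuclideanSpace ℝ (Fin m)) : ℝ≥0∞ :=
  ⨆ (r : ℝ) (_ : 0 < r),
    (volume (Metric.ball x r))⁻¹ * ∫⁻ y in Ω ∩ Metric.ball x r, f y

/-!
Along a segment from `x` to `x + y`, Taylor's formula makes `t ↦ u (x + t • y)` a polynomial of
degree `< k` up to an integral of `‖D^k u‖` over the segment. Lagrange interpolation at `k` nodes
reads off the linear coefficient `Du(x) y` of that polynomial from values of `u`. Averaging over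
all `y` in a ball of radius `r` bounds `‖Du(x)‖` on the left and, after Fubini and a change of
scale, turns the segment integrals into averages of `‖D^k u‖` over balls centred at `x`. Hence
`r * ‖Du(x)‖ ≤ C * (‖u‖_∞ + r ^ k * M‖D^k u‖(x))` for every `r ≤ ρ`, and it remains to optimise
in `r`. For `k = 1`, where interpolation gives nothing, `‖Du(x)‖ ≤ M‖Du‖(x)` by continuity.
-/

open Metric Module Set
open scoped Finset NNReal Nat Pointwise

section LagrangeInterpolation

theorem sum_eval_mul_coeff_basis {K ι : Type*} [Field K] [DecidableEq ι] {s : Finset ι}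
    {v : ι → K} (hv : InjOn v s) {p : Polynomial K} (hp : p.degree < #s) (n : ℕ) :
    ∑ i ∈ s, p.eval (v i) * (Lagrange.basis s v i).coeff n = p.coeff n := by
  conv_rhs => rw [Lagrange.eq_interpolate hv hp, Lagrange.interpolate_apply]
  simp only [Polynomial.finsetSum_coeff, Polynomial.coeff_C_mul]

theorem sum_coeff_basis_smul_sum_pow_smul {K ι V : Type*} [Field K] [DecidableEq ι]
    [AddCommGroup V] [Module K V] {s : Finset ι} {v : ι → K} (hv : InjOn v s) (w : ℕ → V)
    {n : ℕ} (hn : n < #s) :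
    ∑ i ∈ s, (Lagrange.basis s v i).coeff n • ∑ j ∈ Finset.range #s, v i ^ j • w j = w n := by
  have moment : ∀ j ∈ Finset.range #s,
      ∑ i ∈ s, (Lagrange.basis s v i).coeff n * v i ^ j = if n = j then 1 else 0 := by
    intro j hj
    have hdeg : (Polynomial.X ^ j : Polynomial K).degree < #s := by
      simpa only [Polynomial.degree_X_pow, Nat.cast_lt] using Finset.mem_range.1 hj
    simpa only [Polynomial.eval_pow, Polynomial.eval_X, Polynomial.coeff_X_pow, mul_comm]
      using sum_eval_mul_coeff_basis hv hdeg n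
  calc ∑ i ∈ s, (Lagrange.basis s v i).coeff n • ∑ j ∈ Finset.range #s, v i ^ j • w j
      = ∑ j ∈ Finset.range #s, (∑ i ∈ s, (Lagrange.basis s v i).coeff n * v i ^ j) • w j := by
        simp only [Finset.smul_sum, Finset.sum_smul, mul_smul]
        exact Finset.sum_comm
    _ = ∑ j ∈ Finset.range #s, (if n = j then 1 else 0 : K) • w j :=
        Finset.sum_congr rfl fun j hj ↦ by rw [moment j hj]
    _ = w n := by simp [hn]

end LagrangeInterpolation

section Translation

variable {E : Type*} [SeminormedAddCommGroup E] [MeasurableSpace E] [BorelSpace E] (μ : Measure E)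
  [μ.IsAddLeftInvariant]

theorem setLIntegral_ball_comp_add_left (f : E → ℝ≥0∞) (x : E) (r : ℝ) :
    ∫⁻ z in ball 0 r, f (x + z) ∂μ = ∫⁻ y in ball x r, f y ∂μ := by
  have h := (measurePreserving_add_left μ x).setLIntegral_comp_preimage_emb
    (measurableEmbedding_addLeft x) f (ball x r)
  rwa [preimage_add_left_ball, neg_add_cancel] at h

theorem setLIntegral_ball_comp_sub_left [μ.IsNegInvariant] (f : E → ℝ≥0∞) (x : E) (r : ℝ) :
    ∫⁻ z in ball 0 r, f (x - z) ∂μ = ∫⁻ y in ball x r, f y ∂μ := by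
  have h := (Measure.measurePreserving_neg μ).setLIntegral_comp_preimage_emb
    (MeasurableEquiv.neg E).measurableEmbedding (fun z ↦ f (x + z)) (ball 0 r)
  simpa [← sub_eq_add_neg, setLIntegral_ball_comp_add_left] using h

end Translation

section Scaling

theorem add_smul_mem_ball {E : Type*} [SeminormedAddCommGroup E] [NormedSpace ℝ E] {x y : E}
    {r t : ℝ} (hy : y ∈ ball 0 r) (ht : t ∈ Icc (0 : ℝ) 1) : x + t • y ∈ ball x r := by
  rw [mem_ball_zero_iff] at hy
  rw [mem_ball_iff_norm, add_sub_cancel_left, norm_smul, Real.norm_of_nonneg ht.1]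
  exact (mul_le_of_le_one_left (norm_nonneg y) ht.2).trans_lt hy

variable {E : Type*} [NormedAddCommGroup E] [NormedSpace ℝ E] [FiniteDimensional ℝ E]
  [MeasurableSpace E] [BorelSpace E] (μ : Measure E) [μ.IsAddHaarMeasure]

theorem ofReal_mul_setLIntegral_comp_smul (f : E → ℝ≥0∞) (s : Set E) {t : ℝ} (ht : 0 < t) :
    ENNReal.ofReal (t ^ finrank ℝ E) * ∫⁻ y in s, f (t • y) ∂μ = ∫⁻ z in t • s, f z ∂μ := by
  let e : E ≃ᵐ E := .smul₀ t ht.ne'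
  have hpre : e ⁻¹' (t • s) = s := preimage_image_eq s e.injective
  have hmap : μ.map e = ENNReal.ofReal (t ^ finrank ℝ E)⁻¹ • μ := by
    rw [← abs_of_pos (inv_pos.2 (pow_pos ht (finrank ℝ E)))]
    exact Measure.map_addHaar_smul μ ht.ne'
  have hcancel : ENNReal.ofReal (t ^ finrank ℝ E) * ENNReal.ofReal (t ^ finrank ℝ E)⁻¹ = 1 := by
    rw [← ENNReal.ofReal_mul (by positivity), mul_inv_cancel₀ (by positivity), ofReal_one]
  calc ENNReal.ofReal (t ^ finrank ℝ E) * ∫⁻ y in s, f (t • y) ∂μ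
      = ENNReal.ofReal (t ^ finrank ℝ E) * ∫⁻ z in t • s, f z ∂(μ.map e) := by
        rw [e.restrict_map, lintegral_map_equiv, hpre]; rfl
    _ = ∫⁻ z in t • s, f z ∂μ := by
        rw [hmap, Measure.restrict_smul, lintegral_smul_measure, smul_eq_mul, ← mul_assoc,
          hcancel, one_mul]

theorem ofReal_mul_lintegral_Ioc_comp_mul_le (f : ℝ → ℝ≥0∞) {t : ℝ} (ht : t ∈ Icc (0 : ℝ) 1) :
    ENNReal.ofReal t * ∫⁻ s in Ioc (0 : ℝ) 1, f (t * s) ≤ ∫⁻ s in Ioc (0 : ℝ) 1, f s := by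
  obtain rfl | ht0 := ht.1.eq_or_lt
  · simp
  have hscale := ofReal_mul_setLIntegral_comp_smul volume f (Ioc 0 1) ht0
  rw [finrank_self, pow_one, LinearOrderedField.smul_Ioc ht0, mul_zero, mul_one] at hscale
  exact hscale.trans_le (lintegral_mono_set (Ioc_subset_Ioc_right ht.2))

theorem setLIntegral_ball_comp_add_smul_le {f : E → ℝ≥0∞} {x : E} {r t : ℝ} {M : ℝ≥0∞}
    (ht : 0 < t) (hM : ∫⁻ z in ball x (t * r), f z ∂μ ≤ M * μ (ball x (t * r))) :
    ∫⁻ y in ball 0 r, f (x + t • y) ∂μ ≤ M * μ (ball x r) := by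
  set c := ENNReal.ofReal (t ^ finrank ℝ E) with hc
  have hc0 : c ≠ 0 := (ENNReal.ofReal_pos.2 (pow_pos ht _)).ne'
  rw [← ENNReal.mul_le_mul_iff_right hc0 ofReal_ne_top]
  calc c * ∫⁻ y in ball 0 r, f (x + t • y) ∂μ = ∫⁻ z in ball x (t * r), f z ∂μ := by
        rw [hc, ofReal_mul_setLIntegral_comp_smul μ (fun z ↦ f (x + z)) _ ht,
          _root_.smul_ball ht.ne', smul_zero, Real.norm_of_nonneg ht.le,
          setLIntegral_ball_comp_add_left]
    _ ≤ M * μ (ball x (t * r)) := hM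
    _ = c * (M * μ (ball x r)) := by
        rw [Measure.addHaar_ball_mul_of_pos μ x ht, ← Measure.addHaar_ball_center μ x,
          mul_left_comm]

theorem setLIntegral_ball_lintegral_segment_le {f : E → ℝ≥0∞} {x : E} {r : ℝ} {M : ℝ≥0∞}
    (hf : ContinuousOn f (ball x r))
    (hM : ∀ s ∈ Ioc 0 r, ∫⁻ z in ball x s, f z ∂μ ≤ M * μ (ball x s)) :
    ∫⁻ y in ball 0 r, (∫⁻ t in Ioc (0 : ℝ) 1, f (x + t • y)) ∂μ ≤ M * μ (ball x r) := by
  obtain hr | hr := le_or_gt r 0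
  · simp [ball_eq_empty.2 hr]
  have hmaps : MapsTo (fun p : E × ℝ ↦ x + p.2 • p.1) (ball 0 r ×ˢ Ioc 0 1) (ball x r) :=
    fun p hp ↦ add_smul_mem_ball hp.1 (Ioc_subset_Icc_self hp.2)
  have hcont : ContinuousOn (fun p : E × ℝ ↦ f (x + p.2 • p.1)) (ball 0 r ×ˢ Ioc 0 1) :=
    hf.comp (by fun_prop) hmaps
  have hmeas : AEMeasurable (Function.uncurry fun (y : E) (t : ℝ) ↦ f (x + t • y))
      ((μ.restrict (ball 0 r)).prod (volume.restrict (Ioc 0 1))) := by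
    rw [Measure.prod_restrict]
    exact hcont.aemeasurable (measurableSet_ball.prod measurableSet_Ioc)
  calc ∫⁻ y in ball 0 r, (∫⁻ t in Ioc (0 : ℝ) 1, f (x + t • y)) ∂μ
      = ∫⁻ t in Ioc (0 : ℝ) 1, ∫⁻ y in ball 0 r, f (x + t • y) ∂μ :=
        lintegral_lintegral_swap hmeas
    _ ≤ ∫⁻ _ in Ioc (0 : ℝ) 1, M * μ (ball x r) :=
        setLIntegral_mono measurable_const fun t ht ↦ setLIntegral_ball_comp_add_smul_le μ ht.1
          (hM _ ⟨mul_pos ht.1 hr, mul_le_of_le_one_left hr.le ht.2⟩)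
    _ = M * μ (ball x r) := by simp

end Scaling

section LandauKolmogorov

variable {E F : Type*} [NormedAddCommGroup E] [NormedSpace ℝ E] [NormedAddCommGroup F]
  [NormedSpace ℝ F]

/-- The degree `j` term `D^j u(x)[y, …, y] / j!` of the Taylor expansion of `y ↦ u (x + y)`. -/
noncomputable def taylorTerm (u : E → F) (x y : E) (j : ℕ) : F :=
  (j ! : ℝ)⁻¹ • iteratedFDeriv ℝ j u x fun _ ↦ y

theorem taylorTerm_one (u : E → F) (x y : E) : taylorTerm u x y 1 = fderiv ℝ u x y := by
  simp [taylorTerm]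

theorem taylorTerm_smul (u : E → F) (x y : E) (t : ℝ) (j : ℕ) :
    taylorTerm u x (t • y) j = t ^ j • taylorTerm u x y j := by
  have h := (iteratedFDeriv ℝ j u x).map_smul_univ (fun _ ↦ t) fun _ ↦ y
  rw [Finset.prod_const, Finset.card_fin] at h
  rw [taylorTerm, taylorTerm, h, smul_comm]

theorem enorm_apply_const_le {n : ℕ} (A : E [×n]→L[ℝ] F) (y : E) :
    ‖A fun _ ↦ y‖ₑ ≤ ‖A‖ₑ * ‖y‖ₑ ^ n := by
  have h := A.le_opNNNorm fun _ ↦ y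
  rw [Finset.prod_const, Finset.card_fin] at h
  simp only [enorm_eq_nnnorm]
  exact_mod_cast h

theorem enorm_sub_sum_taylorTerm_le [CompleteSpace F] {u : E → F} {x y : E} {n : ℕ}
    (hu : ∀ t ∈ Icc (0 : ℝ) 1, ContDiffAt ℝ (n + 1) u (x + t • y)) :
    ‖u (x + y) - ∑ j ∈ Finset.range (n + 1), taylorTerm u x y j‖ₑ
      ≤ ‖y‖ₑ ^ (n + 1) * ∫⁻ t in Ioc (0 : ℝ) 1, ‖iteratedFDeriv ℝ (n + 1) u (x + t • y)‖ₑ := by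
  have hfactorial : ‖(n ! : ℝ)⁻¹‖ₑ ≤ 1 := by
    rw [Real.enorm_of_nonneg (by positivity), ENNReal.ofReal_le_one]
    exact inv_le_one_of_one_le₀ (by exact_mod_cast n.factorial_pos)
  have hintegrand : ∀ t ∈ Ioc (0 : ℝ) 1,
      ‖(1 - t) ^ n • iteratedFDeriv ℝ (n + 1) u (x + t • y) fun _ ↦ y‖ₑ
        ≤ ‖y‖ₑ ^ (n + 1) * ‖iteratedFDeriv ℝ (n + 1) u (x + t • y)‖ₑ := by
    intro t ht
    have hpow : ‖(1 - t) ^ n‖ₑ ≤ 1 := by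
      rw [enorm_pow, Real.enorm_of_nonneg (sub_nonneg.2 ht.2)]
      exact pow_le_one' (ENNReal.ofReal_le_one.2 (sub_le_self 1 ht.1.le)) n
    rw [enorm_smul, mul_comm (‖y‖ₑ ^ _)]
    exact (mul_le_of_le_one_left' hpow).trans (enorm_apply_const_le _ y)
  calc ‖u (x + y) - ∑ j ∈ Finset.range (n + 1), taylorTerm u x y j‖ₑ
      = ‖(n ! : ℝ)⁻¹‖ₑ * ‖∫ t in Ioc (0 : ℝ) 1,
          (1 - t) ^ n • iteratedFDeriv ℝ (n + 1) u (x + t • y) fun _ ↦ y‖ₑ := by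
        rw [map_add_eq_sum_add_integral_iteratedFDeriv hu, ← enorm_smul,
          intervalIntegral.integral_of_le zero_le_one]
        simp only [taylorTerm, add_sub_cancel_left]
    _ ≤ ∫⁻ t in Ioc (0 : ℝ) 1,
          ‖(1 - t) ^ n • iteratedFDeriv ℝ (n + 1) u (x + t • y) fun _ ↦ y‖ₑ :=
        (mul_le_of_le_one_left' hfactorial).trans (enorm_integral_le_lintegral_enorm _)
    _ ≤ ∫⁻ t in Ioc (0 : ℝ) 1, ‖y‖ₑ ^ (n + 1) * ‖iteratedFDeriv ℝ (n + 1) u (x + t • y)‖ₑ :=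
        setLIntegral_mono' measurableSet_Ioc hintegrand
    _ = _ := lintegral_const_mul' _ _ (pow_ne_top enorm_ne_top)

theorem enorm_sub_sum_pow_smul_taylorTerm_le [CompleteSpace F] {u : E → F} {x y : E} {n : ℕ}
    (hu : ∀ t ∈ Icc (0 : ℝ) 1, ContDiffAt ℝ (n + 1) u (x + t • y)) {t : ℝ}
    (ht : t ∈ Icc (0 : ℝ) 1) :
    ‖u (x + t • y) - ∑ j ∈ Finset.range (n + 1), t ^ j • taylorTerm u x y j‖ₑ
      ≤ ‖y‖ₑ ^ (n + 1) * ∫⁻ s in Ioc (0 : ℝ) 1, ‖iteratedFDeriv ℝ (n + 1) u (x + s • y)‖ₑ := by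
  set D : ℝ → ℝ≥0∞ := fun s ↦ ‖iteratedFDeriv ℝ (n + 1) u (x + s • y)‖ₑ
  have hshort : ∀ s ∈ Icc (0 : ℝ) 1, ContDiffAt ℝ (n + 1) u (x + s • t • y) := fun s hs ↦ by
    rw [smul_smul]
    exact hu _ ⟨mul_nonneg hs.1 ht.1, mul_le_one₀ hs.2 ht.1 ht.2⟩
  have htaylor := enorm_sub_sum_taylorTerm_le hshort
  simp only [taylorTerm_smul, smul_smul, mul_comm _ t] at htaylor
  have htn : ENNReal.ofReal t ^ n ≤ 1 := pow_le_one' (ENNReal.ofReal_le_one.2 ht.2) n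
  calc ‖u (x + t • y) - ∑ j ∈ Finset.range (n + 1), t ^ j • taylorTerm u x y j‖ₑ
      ≤ ‖t • y‖ₑ ^ (n + 1) * ∫⁻ s in Ioc (0 : ℝ) 1, D (t * s) := htaylor
    _ = ENNReal.ofReal t ^ n *
          (‖y‖ₑ ^ (n + 1) * (ENNReal.ofReal t * ∫⁻ s in Ioc (0 : ℝ) 1, D (t * s))) := by
        rw [enorm_smul, Real.enorm_of_nonneg ht.1]
        ring
    _ ≤ ‖y‖ₑ ^ (n + 1) * (ENNReal.ofReal t * ∫⁻ s in Ioc (0 : ℝ) 1, D (t * s)) :=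
        mul_le_of_le_one_left' htn
    _ ≤ ‖y‖ₑ ^ (n + 1) * ∫⁻ s in Ioc (0 : ℝ) 1, D s := by
        gcongr
        exact ofReal_mul_lintegral_Ioc_comp_mul_le D ht

/-- The interpolation nodes `1, 1/2, 1/3, …` in `[0, 1]`. -/
noncomputable def harmonicNode (i : ℕ) : ℝ := ((i : ℝ) + 1)⁻¹

theorem harmonicNode_injective : Function.Injective harmonicNode := fun i j h ↦ by
  simpa [harmonicNode] using h

theorem harmonicNode_mem_Icc (i : ℕ) : harmonicNode i ∈ Icc (0 : ℝ) 1 :=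
  ⟨by unfold harmonicNode; positivity,
    inv_le_one_of_one_le₀ (le_add_of_nonneg_left i.cast_nonneg)⟩

/-- The sum of the absolute values of the weights `c i` for which `∑ i, c i * p (harmonicNode i)`
is the linear coefficient of every polynomial `p` of degree less than `k`. -/
noncomputable def landauConst (k : ℕ) : ℝ≥0 :=
  ∑ i ∈ Finset.range k, ‖(Lagrange.basis (Finset.range k) harmonicNode i).coeff 1‖₊

theorem enorm_fderiv_apply_le [CompleteSpace F] {u : E → F} {x y : E} {k : ℕ} (hk : 1 < k)
    {S : ℝ≥0∞} (hu : ∀ t ∈ Icc (0 : ℝ) 1, ContDiffAt ℝ k u (x + t • y))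
    (hS : ∀ t ∈ Icc (0 : ℝ) 1, ‖u (x + t • y)‖ₑ ≤ S) :
    ‖fderiv ℝ u x y‖ₑ ≤ landauConst k *
      (S + ‖y‖ₑ ^ k * ∫⁻ t in Ioc (0 : ℝ) 1, ‖iteratedFDeriv ℝ k u (x + t • y)‖ₑ) := by
  set R := ‖y‖ₑ ^ k * ∫⁻ t in Ioc (0 : ℝ) 1, ‖iteratedFDeriv ℝ k u (x + t • y)‖ₑ
  set c : ℕ → ℝ := fun i ↦ (Lagrange.basis (Finset.range k) harmonicNode i).coeff 1
  set P : ℝ → F := fun t ↦ ∑ j ∈ Finset.range k, t ^ j • taylorTerm u x y j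
  have hP : ∀ t ∈ Icc (0 : ℝ) 1, ‖P t‖ₑ ≤ S + R := by
    intro t ht
    obtain ⟨n, rfl⟩ : ∃ n, k = n + 1 := Nat.exists_eq_succ_of_ne_zero (by lia)
    calc ‖P t‖ₑ = ‖u (x + t • y) - (u (x + t • y) - P t)‖ₑ := by rw [_root_.sub_sub_cancel]
      _ ≤ ‖u (x + t • y)‖ₑ + ‖u (x + t • y) - P t‖ₑ := enorm_sub_le
      _ ≤ S + R :=
          add_le_add (hS t ht) (enorm_sub_sum_pow_smul_taylorTerm_le (by exact_mod_cast hu) ht)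
  have hlinear : ∑ i ∈ Finset.range k, c i • P (harmonicNode i) = fderiv ℝ u x y := by
    have h := sum_coeff_basis_smul_sum_pow_smul (s := Finset.range k)
      harmonicNode_injective.injOn (taylorTerm u x y) (n := 1) (by rwa [Finset.card_range])
    rwa [Finset.card_range, taylorTerm_one] at h
  calc ‖fderiv ℝ u x y‖ₑ ≤ ∑ i ∈ Finset.range k, ‖c i • P (harmonicNode i)‖ₑ := by
        rw [← hlinear]
        exact enorm_sum_le _ _
    _ ≤ ∑ i ∈ Finset.range k, ‖c i‖ₑ * (S + R) := by
        simp only [enorm_smul]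
        gcongr with i
        exact hP _ (harmonicNode_mem_Icc i)
    _ = landauConst k * (S + R) := by
        rw [← Finset.sum_mul, landauConst, ENNReal.ofNNReal_finsetSum]
        rfl

end LandauKolmogorov

section OperatorNorm

variable {E F : Type*} [NormedAddCommGroup E] [NormedSpace ℝ E] [FiniteDimensional ℝ E]
  [NormedAddCommGroup F] [NormedSpace ℝ F]

theorem exists_enorm_apply_eq_enorm (A : E →L[ℝ] F) : ∃ v, ‖v‖ ≤ 1 ∧ ‖A v‖ₑ = ‖A‖ₑ := by
  obtain ⟨v, hv, hAv⟩ := (isCompact_closedBall (0 : E) 1).exists_sSup_image_eq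
    (nonempty_closedBall.2 zero_le_one) A.continuous.norm.continuousOn
  rw [A.sSup_unitClosedBall_eq_norm] at hAv
  exact ⟨v, mem_closedBall_zero_iff.1 hv, enorm_eq_iff_norm_eq.2 hAv.symm⟩

variable [MeasurableSpace E] [BorelSpace E] (μ : Measure E) [μ.IsAddHaarMeasure]

theorem measure_ball_mul_enorm_apply_le (A : E →L[ℝ] F) {v : E} {r : ℝ} (hv : ‖v‖ ≤ r) :
    μ (ball 0 r) * ‖A v‖ₑ ≤ ∫⁻ y in ball 0 (2 * r), ‖A y‖ₑ ∂μ := by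
  have hsymm : ∀ z, 2 * ‖A v‖ₑ ≤ ‖A (v + z)‖ₑ + ‖A (v - z)‖ₑ := fun z ↦
    calc 2 * ‖A v‖ₑ = ‖A (v + z) + A (v - z)‖ₑ := by
          rw [← map_add, add_add_sub_cancel, map_add, ← two_smul ℝ, enorm_smul,
            Real.enorm_of_nonneg zero_le_two, ENNReal.ofReal_ofNat]
      _ ≤ ‖A (v + z)‖ₑ + ‖A (v - z)‖ₑ := enorm_add_le _ _
  have hball : ball v r ⊆ ball 0 (2 * r) := ball_subset_ball' (by rw [dist_zero_right]; linarith)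
  refine (ENNReal.mul_le_mul_iff_right two_ne_zero ofNat_ne_top).1 ?_
  calc 2 * (μ (ball 0 r) * ‖A v‖ₑ) = ∫⁻ _ in ball 0 r, 2 * ‖A v‖ₑ ∂μ := by
        rw [setLIntegral_const]
        ring
    _ ≤ ∫⁻ z in ball 0 r, ‖A (v + z)‖ₑ + ‖A (v - z)‖ₑ ∂μ := lintegral_mono hsymm
    _ = 2 * ∫⁻ y in ball v r, ‖A y‖ₑ ∂μ := by
        rw [lintegral_add_left (Continuous.measurable (by fun_prop)),
          setLIntegral_ball_comp_add_left μ fun y ↦ ‖A y‖ₑ,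
          setLIntegral_ball_comp_sub_left μ fun y ↦ ‖A y‖ₑ, two_mul]
    _ ≤ 2 * ∫⁻ y in ball 0 (2 * r), ‖A y‖ₑ ∂μ := by gcongr

theorem measure_ball_mul_ofReal_mul_enorm_le (A : E →L[ℝ] F) {r : ℝ} (hr : 0 < r) :
    μ (ball 0 r) * (ENNReal.ofReal r * ‖A‖ₑ)
      ≤ 2 ^ (finrank ℝ E + 1) * ∫⁻ y in ball 0 r, ‖A y‖ₑ ∂μ := by
  obtain ⟨s, rfl⟩ : ∃ s, r = 2 * s := ⟨r / 2, by ring⟩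
  have hs : 0 < s := by linarith
  obtain ⟨v, hv, hAv⟩ := exists_enorm_apply_eq_enorm A
  have hsv : ‖s • v‖ ≤ s := by
    rw [norm_smul, Real.norm_of_nonneg hs.le]
    exact mul_le_of_le_one_right hs.le hv
  calc μ (ball 0 (2 * s)) * (ENNReal.ofReal (2 * s) * ‖A‖ₑ)
      = 2 ^ (finrank ℝ E + 1) * (μ (ball 0 s) * (ENNReal.ofReal s * ‖A‖ₑ)) := by
        rw [Measure.addHaar_ball_mul_of_pos μ 0 two_pos, ENNReal.ofReal_pow zero_le_two,
          ENNReal.ofReal_mul zero_le_two, ENNReal.ofReal_ofNat]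
        ring
    _ = 2 ^ (finrank ℝ E + 1) * (μ (ball 0 s) * ‖A (s • v)‖ₑ) := by
        rw [map_smul, enorm_smul, Real.enorm_of_nonneg hs.le, hAv]
    _ ≤ 2 ^ (finrank ℝ E + 1) * ∫⁻ y in ball 0 (2 * s), ‖A y‖ₑ ∂μ := by
        gcongr
        exact measure_ball_mul_enorm_apply_le μ A hsv

end OperatorNorm

section LocalEstimate

theorem le_of_setLIntegral_ball_le {X : Type*} [PseudoMetricSpace X] [ProperSpace X]
    [MeasurableSpace X] [OpensMeasurableSpace X] (μ : Measure X) [μ.IsOpenPosMeasure]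
    [IsFiniteMeasureOnCompacts μ] {f : X → ℝ≥0∞} {x : X} {r : ℝ} {M : ℝ≥0∞} (hr : 0 < r)
    (hf : ContinuousAt f x)
    (hM : ∀ s ∈ Ioc 0 r, ∫⁻ z in ball x s, f z ∂μ ≤ M * μ (ball x s)) : f x ≤ M := by
  refine le_of_forall_lt_imp_le_of_dense fun c hc ↦ ?_
  obtain ⟨ε, hε, hcf⟩ := Metric.eventually_nhds_iff_ball.1 (hf.eventually (lt_mem_nhds hc))
  have hs : 0 < min ε r := lt_min hε hr
  refine (ENNReal.mul_le_mul_iff_left (measure_ball_pos μ x hs).ne' measure_ball_lt_top.ne).1 ?_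
  calc c * μ (ball x (min ε r)) = ∫⁻ _ in ball x (min ε r), c ∂μ := (setLIntegral_const _ _).symm
    _ ≤ ∫⁻ z in ball x (min ε r), f z ∂μ := setLIntegral_mono' measurableSet_ball fun z hz ↦
        (hcf z (ball_subset_ball (min_le_left _ _) hz)).le
    _ ≤ M * μ (ball x (min ε r)) := hM _ ⟨hs, min_le_right _ _⟩

variable {E F : Type*} [NormedAddCommGroup E] [NormedSpace ℝ E] [FiniteDimensional ℝ E]
  [MeasurableSpace E] [BorelSpace E] (μ : Measure E) [μ.IsAddHaarMeasure]
  [NormedAddCommGroup F] [NormedSpace ℝ F]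

variable {u : E → F} {x : E} {r : ℝ} {k : ℕ} {S M : ℝ≥0∞}

theorem enorm_fderiv_le_of_setLIntegral_ball_le (hr : 0 < r) (hu : ContDiffAt ℝ 1 u x)
    (hM : ∀ s ∈ Ioc 0 r, ∫⁻ z in ball x s, ‖iteratedFDeriv ℝ 1 u z‖ₑ ∂μ ≤ M * μ (ball x s)) :
    ‖fderiv ℝ u x‖ₑ ≤ M := by
  have hcont : ContinuousAt (fun z ↦ ‖iteratedFDeriv ℝ 1 u z‖ₑ) x :=
    (hu.iteratedFDeriv_right (m := 0) (i := 1) (by simp)).continuousAt.enorm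
  have h := le_of_setLIntegral_ball_le μ hr hcont hM
  rwa [enorm_eq_iff_norm_eq.2 (norm_iteratedFDeriv_one u)] at h

theorem ofReal_mul_enorm_fderiv_le_of_one_lt [CompleteSpace F] (hk : 1 < k) (hr : 0 < r)
    (hu : ∀ z ∈ ball x r, ContDiffAt ℝ k u z) (hS : ∀ z ∈ ball x r, ‖u z‖ₑ ≤ S)
    (hM : ∀ s ∈ Ioc 0 r, ∫⁻ z in ball x s, ‖iteratedFDeriv ℝ k u z‖ₑ ∂μ ≤ M * μ (ball x s)) :
    ENNReal.ofReal r * ‖fderiv ℝ u x‖ₑ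
      ≤ 2 ^ (finrank ℝ E + 1) * landauConst k * (S + ENNReal.ofReal r ^ k * M) := by
  set K : ℝ≥0∞ := 2 ^ (finrank ℝ E + 1)
  set L : ℝ≥0∞ := ↑(landauConst k)
  set B := μ (ball 0 r) with hB
  let I : E → ℝ≥0∞ := fun y ↦ ∫⁻ t in Ioc (0 : ℝ) 1, ‖iteratedFDeriv ℝ k u (x + t • y)‖ₑ
  have hcont : ContinuousOn (fun z ↦ ‖iteratedFDeriv ℝ k u z‖ₑ) (ball x r) := fun z hz ↦
    ((hu z hz).iteratedFDeriv_right (m := 0) (by simp)).continuousAt.enorm.continuousWithinAt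
  have hI : ∫⁻ y in ball 0 r, I y ∂μ ≤ M * B := by
    rw [hB, ← Measure.addHaar_ball_center μ x]
    exact setLIntegral_ball_lintegral_segment_le μ hcont hM
  have hray : ∀ y ∈ ball (0 : E) r, ‖fderiv ℝ u x y‖ₑ ≤ L * (S + ENNReal.ofReal r ^ k * I y) := by
    intro y hy
    have hyr : ‖y‖ₑ ≤ ENNReal.ofReal r := by
      rw [← ofReal_norm]
      exact ENNReal.ofReal_le_ofReal (mem_ball_zero_iff.1 hy).le
    refine (enorm_fderiv_apply_le hk (fun t ht ↦ hu _ (add_smul_mem_ball hy ht))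
      fun t ht ↦ hS _ (add_smul_mem_ball hy ht)).trans ?_
    gcongr
  refine (ENNReal.mul_le_mul_iff_right (measure_ball_pos μ 0 hr).ne' measure_ball_lt_top.ne).1 ?_
  calc B * (ENNReal.ofReal r * ‖fderiv ℝ u x‖ₑ)
      ≤ K * ∫⁻ y in ball 0 r, ‖fderiv ℝ u x y‖ₑ ∂μ :=
        measure_ball_mul_ofReal_mul_enorm_le μ _ hr
    _ ≤ K * ∫⁻ y in ball 0 r, L * (S + ENNReal.ofReal r ^ k * I y) ∂μ := by
        gcongr 1
        exact setLIntegral_mono' measurableSet_ball hray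
    _ = K * (L * (S * B + ENNReal.ofReal r ^ k * ∫⁻ y in ball 0 r, I y ∂μ)) := by
        rw [lintegral_const_mul' _ _ coe_ne_top, lintegral_add_left measurable_const,
          setLIntegral_const, lintegral_const_mul' _ _ (pow_ne_top ofReal_ne_top)]
    _ ≤ K * (L * (S * B + ENNReal.ofReal r ^ k * (M * B))) := by gcongr
    _ = B * (K * L * (S + ENNReal.ofReal r ^ k * M)) := by ring

/-- The constant of the first derivative estimate on balls in dimension `d` for maps with `k`
controlled derivatives. The summand `1` takes care of `k = 1`, where `landauConst 1 = 0`. -/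
noncomputable def derivConst (d k : ℕ) : ℝ≥0 := 2 ^ (d + 1) * (landauConst k + 1)

theorem one_le_derivConst (d k : ℕ) : 1 ≤ derivConst d k :=
  one_le_mul (one_le_pow₀ one_le_two) le_add_self

theorem ofReal_mul_enorm_fderiv_le [CompleteSpace F] (hk : k ≠ 0) (hr : 0 < r)
    (hu : ∀ z ∈ ball x r, ContDiffAt ℝ k u z) (hS : ∀ z ∈ ball x r, ‖u z‖ₑ ≤ S)
    (hM : ∀ s ∈ Ioc 0 r, ∫⁻ z in ball x s, ‖iteratedFDeriv ℝ k u z‖ₑ ∂μ ≤ M * μ (ball x s)) :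
    ENNReal.ofReal r * ‖fderiv ℝ u x‖ₑ
      ≤ derivConst (finrank ℝ E) k * (S + ENNReal.ofReal r ^ k * M) := by
  obtain rfl | hk1 : k = 1 ∨ 1 < k := by lia
  · have hD := enorm_fderiv_le_of_setLIntegral_ball_le μ hr
      (by exact_mod_cast hu x (mem_ball_self hr)) hM
    calc ENNReal.ofReal r * ‖fderiv ℝ u x‖ₑ ≤ S + ENNReal.ofReal r ^ 1 * M := by
          rw [pow_one]
          exact le_add_left (by gcongr)
      _ ≤ _ := le_mul_of_one_le_left' (by exact_mod_cast one_le_derivConst _ 1)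
  · refine (ofReal_mul_enorm_fderiv_le_of_one_lt μ hk1 hr hu hS hM).trans ?_
    rw [derivConst]
    push_cast
    gcongr
    exact le_self_add

end LocalEstimate

section Optimisation

variable {k : ℕ}

theorem nnreal_le_rpow_mul_rpow_add_div {a C S M ρ : ℝ≥0} (hk : k ≠ 0) (hS : S ≠ 0) (hρ : 0 < ρ)
    (h : ∀ r, 0 < r → r ≤ ρ → r * a ≤ C * (S + r ^ k * M)) :
    a ≤ 2 * C * (S ^ (1 - 1 / (k : ℝ)) * M ^ (1 / (k : ℝ)) + S / ρ) := by
  -- The radius `q⁻¹` balances `S` against `r ^ k * M`; the `r` below is comparable to `min ρ q⁻¹`.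
  set q := (M / S) ^ (1 / (k : ℝ)) with hq
  have hqk : q ^ k * S = M := by
    rw [hq, one_div, NNReal.rpow_inv_natCast_pow _ hk, div_mul_cancel₀ _ hS]
  have hSq : S * q = S ^ (1 - 1 / (k : ℝ)) * M ^ (1 / (k : ℝ)) := by
    rw [hq, NNReal.div_rpow, NNReal.rpow_sub hS, NNReal.rpow_one]
    ring
  set r := (ρ⁻¹ + q)⁻¹ with hr
  have hr0 : 0 < r := inv_pos.2 (add_pos_of_pos_of_nonneg (inv_pos.2 hρ) zero_le)
  have hrρ : r ≤ ρ := inv_le_of_inv_le₀ hρ le_self_add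
  have hrq : r * q ≤ 1 := by
    rw [hr, inv_mul_le_one₀ (inv_pos.1 hr0)]
    exact le_add_self
  have hrM : r ^ k * M ≤ S := by
    rw [← hqk, ← mul_assoc, ← mul_pow]
    exact mul_le_of_le_one_left' (pow_le_one' hrq k)
  calc a = r⁻¹ * (r * a) := (inv_mul_cancel_left₀ hr0.ne' a).symm
    _ ≤ r⁻¹ * (C * (S + S)) := by
        gcongr r⁻¹ * ?_
        exact (h r hr0 hrρ).trans (by gcongr)
    _ = 2 * C * (S * q + S / ρ) := by
        rw [hr, inv_inv]
        ring
    _ = _ := by rw [hSq]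

theorem ennreal_le_rpow_mul_rpow_add_div {a S M : ℝ≥0∞} {C ρ : ℝ≥0} (hk : k ≠ 0) (ha : a ≠ ⊤)
    (hS : S ≠ 0) (hC : C ≠ 0) (hρ : 0 < ρ)
    (h : ∀ r : ℝ≥0, 0 < r → r ≤ ρ → r * a ≤ C * (S + r ^ k * M)) :
    a ≤ 2 * C * (S ^ (1 - 1 / (k : ℝ)) * M ^ (1 / (k : ℝ)) + S / ρ) := by
  have hk0 : 0 < 1 / (k : ℝ) := by positivity
  have hk1 : 0 ≤ 1 - 1 / (k : ℝ) := sub_nonneg.2 (by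
    rw [one_div]
    exact inv_le_one_of_one_le₀ (by exact_mod_cast Nat.one_le_iff_ne_zero.2 hk))
  have h2C : (2 * C : ℝ≥0∞) ≠ 0 := by simp [hC]
  obtain rfl | hStop := eq_or_ne S ⊤
  · rw [top_div_coe, add_top, mul_top h2C]
    exact le_top
  obtain rfl | hMtop := eq_or_ne M ⊤
  · rw [top_rpow_of_pos hk0, mul_top (by simp [rpow_eq_zero_iff, hS, hStop]), top_add, mul_top h2C]
    exact le_top
  lift a to ℝ≥0 using ha
  lift S to ℝ≥0 using hStop
  lift M to ℝ≥0 using hMtop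
  rw [← coe_rpow_of_nonneg _ hk1, ← coe_rpow_of_nonneg _ hk0.le, ← coe_div hρ.ne']
  exact_mod_cast nnreal_le_rpow_mul_rpow_add_div hk (by exact_mod_cast hS) hρ (by exact_mod_cast h)

end Optimisation

theorem enorm_fderiv_le_rpow_mul_rpow_add {E F : Type*} [NormedAddCommGroup E] [NormedSpace ℝ E]
    [FiniteDimensional ℝ E] [MeasurableSpace E] [BorelSpace E] (μ : Measure E)
    [μ.IsAddHaarMeasure] [NormedAddCommGroup F] [NormedSpace ℝ F] [CompleteSpace F]
    {u : E → F} {x : E} {k : ℕ} {ρ : ℝ≥0} {S M : ℝ≥0∞} (hk : k ≠ 0) (hρ : 0 < ρ)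
    (hu : ∀ z ∈ ball x ρ, ContDiffAt ℝ k u z) (hS : ∀ z ∈ ball x ρ, ‖u z‖ₑ ≤ S)
    (hM : ∀ s ∈ Ioc (0 : ℝ) ρ,
      ∫⁻ z in ball x s, ‖iteratedFDeriv ℝ k u z‖ₑ ∂μ ≤ M * μ (ball x s)) :
    ‖fderiv ℝ u x‖ₑ ≤ 2 * derivConst (finrank ℝ E) k *
      (S ^ (1 - 1 / (k : ℝ)) * M ^ (1 / (k : ℝ)) + S / ρ) := by
  obtain rfl | hS0 := eq_or_ne S 0
  · have hu0 : u =ᶠ[𝓝 x] fun _ ↦ 0 := by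
      filter_upwards [ball_mem_nhds x (NNReal.coe_pos.2 hρ)] with y hy
      simpa only [nonpos_iff_eq_zero, enorm_eq_zero] using hS y hy
    rw [← ofReal_norm, hu0.fderiv_eq, fderiv_fun_const, Pi.zero_apply, norm_zero, ofReal_zero]
    exact zero_le
  refine ennreal_le_rpow_mul_rpow_add_div hk enorm_ne_top hS0
    (one_pos.trans_le (one_le_derivConst _ k)).ne' hρ fun r hr hrρ ↦ ?_
  have hsub : ball x r ⊆ ball x ρ := ball_subset_ball (NNReal.coe_le_coe.2 hrρ)
  simpa only [ENNReal.ofReal_coe_nnreal] using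
    ofReal_mul_enorm_fderiv_le μ hk (NNReal.coe_pos.2 hr) (fun z hz ↦ hu z (hsub hz))
      (fun z hz ↦ hS z (hsub hz)) fun s hs ↦ hM s ⟨hs.1, hs.2.trans (NNReal.coe_le_coe.2 hrρ)⟩

theorem setLIntegral_ball_le_maximalFn_mul {m : ℕ} {Ω : Set (EuclideanSpace ℝ (Fin m))}
    (f : EuclideanSpace ℝ (Fin m) → ℝ≥0∞) {x : EuclideanSpace ℝ (Fin m)} {r : ℝ} (hr : 0 < r)
    (hΩ : ball x r ⊆ Ω) :
    ∫⁻ y in ball x r, f y ≤ maximalFn Ω f x * volume (ball x r) := by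
  have h : (volume (ball x r))⁻¹ * ∫⁻ y in Ω ∩ ball x r, f y ≤ maximalFn Ω f x :=
    le_iSup₂ (f := fun s (_ : 0 < s) ↦ (volume (ball x s))⁻¹ * ∫⁻ y in Ω ∩ ball x s, f y) r hr
  rw [inter_eq_self_of_subset_right hΩ, mul_comm, ← div_eq_mul_inv] at h
  exact (ENNReal.div_le_iff (measure_ball_pos volume x hr).ne' measure_ball_lt_top.ne).1 h

theorem pointwise_interpolation_general.{v} (m k : ℕ) (hk : k ≠ 0) :
    ∃ C : ℝ, 0 < C ∧ ∀ (F : Type v) [NormedAddCommGroup F] [NormedSpace ℝ F] [CompleteSpace F]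
      (Ω : Set (EuclideanSpace ℝ (Fin m))), IsOpen Ω →
      ∀ (u : EuclideanSpace ℝ (Fin m) → F), ContDiffOn ℝ k u Ω →
      ∀ (ρ : ℝ), 0 < ρ → ∀ x, ball x ρ ⊆ Ω →
        ‖fderivWithin ℝ u Ω x‖ₑ ≤ ENNReal.ofReal C *
          ((⨆ y ∈ Ω, ‖u y‖ₑ) ^ (1 - 1 / (k : ℝ)) *
              (maximalFn Ω (fun y ↦ ‖iteratedFDerivWithin ℝ k u Ω y‖ₑ) x) ^ (1 / (k : ℝ))
            + (⨆ y ∈ Ω, ‖u y‖ₑ) / ENNReal.ofReal ρ) := by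
  refine ⟨↑(2 * derivConst m k),
    NNReal.coe_pos.2 (mul_pos two_pos (one_pos.trans_le (one_le_derivConst m k))),
    fun F _ _ _ Ω hΩ u hu ρ hρ x hball ↦ ?_⟩
  lift ρ to ℝ≥0 using hρ.le
  have hsup : ∀ z ∈ ball x ρ, ‖u z‖ₑ ≤ ⨆ y ∈ Ω, ‖u y‖ₑ := fun z hz ↦
    le_iSup₂ (f := fun y _ ↦ ‖u y‖ₑ) z (hball hz)
  have hmax : ∀ s ∈ Ioc (0 : ℝ) ρ, ∫⁻ z in ball x s, ‖iteratedFDeriv ℝ k u z‖ₑ ≤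
      maximalFn Ω (fun y ↦ ‖iteratedFDerivWithin ℝ k u Ω y‖ₑ) x * volume (ball x s) := by
    intro s hs
    have hsub : ball x s ⊆ Ω := (ball_subset_ball hs.2).trans hball
    refine Eq.trans_le (setLIntegral_congr_fun measurableSet_ball fun z hz ↦ ?_)
      (setLIntegral_ball_le_maximalFn_mul _ hs.1 hsub)
    rw [iteratedFDerivWithin_of_isOpen k hΩ (hsub hz)]
  have h := enorm_fderiv_le_rpow_mul_rpow_add volume hk (NNReal.coe_pos.1 hρ)
    (fun z hz ↦ hu.contDiffAt (hΩ.mem_nhds (hball hz))) hsup hmax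
  rw [finrank_euclideanSpace_fin] at h
  rw [fderivWithin_of_isOpen hΩ (hball (mem_ball_self hρ)), ENNReal.ofReal_coe_nnreal,
    ENNReal.ofReal_coe_nnreal, coe_mul, coe_ofNat]
  exact h

/-- Pointwise Maz'ya–Shaposhnikova-type interpolation inequality
(Proposition 3.4). -/
theorem pointwise_interpolation (m k : ℕ) (hm : 1 ≤ m) (hk : 1 ≤ k) :
    ∃ C : ℝ, 0 < C ∧ ∀ (ν : ℕ), 1 ≤ ν →
      ∀ (Ω : Set (EuclideanSpace ℝ (Fin m))), IsOpen Ω →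
      ∀ (u : EuclideanSpace ℝ (Fin m) → EuclideanSpace ℝ (Fin ν)),
        ContDiffOn ℝ k u Ω → Bornology.IsBounded (u '' Ω) →
      ∀ (ρ : ℝ), 0 < ρ → ∀ x ∈ Ω, Metric.ball x ρ ⊆ Ω →
        (‖fderivWithin ℝ u Ω x‖₊ : ℝ≥0∞) ≤ ENNReal.ofReal C *
          ((⨆ y ∈ Ω, (‖u y‖₊ : ℝ≥0∞)) ^ (1 - 1 / (k : ℝ)) *
              (maximalFn Ω
                (fun y => (‖iteratedFDerivWithin ℝ k u Ω y‖₊ : ℝ≥0∞)) x) ^ (1 / (k : ℝ))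
            + (⨆ y ∈ Ω, (‖u y‖₊ : ℝ≥0∞)) / ENNReal.ofReal ρ) := by
  obtain ⟨C, hC, h⟩ := pointwise_interpolation_general m k (Nat.one_le_iff_ne_zero.1 hk)
  exact ⟨C, hC, fun ν _ Ω hΩ u hu _ ρ hρ x _ ↦ h _ Ω hΩ u hu ρ hρ x⟩
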